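/- Comparison principle: let g, h : ℝ → ℝ be locally Lipschitz continuous with g(ζ) ≤ h(ζ) for all ζ ∈ ℝ, let T > 0, and let u, v : ℝ × [0,T] → ℝ be bounded continuous mild solutions of ∂_t u + Au = g(u) and ∂_t v + Av = h(v) respectively. If u(x,0) ≤ v(x,0) for all x ∈ ℝ, then u(x,t) ≤ v(x,t) for all x ∈ ℝ and t ∈ [0,T]. -/

import Mathlib

open Real MeasureTheory

/-- The fundamental solution at time `t` of the free equation `∂_t u + Au = 0`,
where `A` is the order-1 pseudodifferential operator with symbol
`λ ↦ e^{−iπ·sign(λ)·β/2}|λ|`, `κ = cos(πβ/2)`, `σ = sin(πβ/2)`. -/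
noncomputable def stableKernel (κ σ t x : ℝ) : ℝ :=
  κ * t / (π * ((x - σ * t) ^ 2 + (κ * t) ^ 2))

/-- `u : ℝ × [0,T] → ℝ` is a mild solution of `∂_t u + Au = g(u)`:
`u(x,t) = ∫ p_t(x−y)·u(y,0) dy + ∫₀ᵗ ∫ p_{t−s}(x−y)·g(u(y,s)) dy ds`. -/
def IsMildSolution (κ σ : ℝ) (g : ℝ → ℝ) (T : ℝ) (u : ℝ → ℝ → ℝ) : Prop :=
  ∀ x t : ℝ, 0 < t → t ≤ T →
    u x t = (∫ y : ℝ, stableKernel κ σ t (x - y) * u y 0) +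
      ∫ s in Set.Ioc (0 : ℝ) t,
        ∫ y : ℝ, stableKernel κ σ (t - s) (x - y) * g (u y s)

/-!
The difference `w = v - u` is a mild solution of `∂ₜ w + A w = F`, where `F = h(v) - g(u)` satisfies
`F ≥ -L |w|` because `g ≤ h` and `h` is Lipschitz on the range of `u` and `v`. Adding `L w` to both
sides leaves a forcing `F + L w ≥ -2 L w⁻`, and Duhamel's formula for the positive semigroup
`exp (-t (A + L))` turns a lower bound `w ≥ -m` into `w(t) ≥ -2 L ∫₀ᵗ m`. Iterating from `w ≥ -C`
gives `w ≥ -C (2 L t) ^ n / n!` for all `n`, hence `w ≥ 0`. Passing from one form of Duhamel's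
formula to the other uses only the Chapman-Kolmogorov equations, which for Cauchy laws are read off
their characteristic functions.
-/

section

open ProbabilityTheory Set Function
open scoped Nat FourierTransform NNReal

variable {α β X : Type*} [MeasurableSpace α] [MeasurableSpace β] [MeasurableSpace X]

/-! ### Bounded measurable functions -/

/-- Bounded measurable real functions: the class on which a Markov kernel acts by integration. -/
structure IsBddMeasurable (f : α → ℝ) : Prop where
  measurable : Measurable f
  bounded : ∃ C, ∀ a, |f a| ≤ C

namespace IsBddMeasurable

variable {f f' : α → ℝ}

lemma comp_measurable (hf : IsBddMeasurable f) {e : β → α} (he : Measurable e) :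
    IsBddMeasurable fun b => f (e b) :=
  ⟨hf.measurable.comp he, hf.bounded.imp fun _ hC b => hC (e b)⟩

lemma continuous_comp (hf : IsBddMeasurable f) {g : ℝ → ℝ} (hg : Continuous g) :
    IsBddMeasurable fun a => g (f a) := by
  obtain ⟨C, hC⟩ := hf.bounded
  obtain ⟨D, hD⟩ := isCompact_Icc.exists_bound_of_continuousOn (s := Icc (-C) C) hg.continuousOn
  exact ⟨hg.measurable.comp hf.measurable, D, fun a => hD _ (abs_le.mp (hC a))⟩

lemma slice {f : α → β → ℝ} (hf : IsBddMeasurable (uncurry f)) (b : β) :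
    IsBddMeasurable fun a => f a b :=
  hf.comp_measurable (e := fun a => (a, b)) (by fun_prop)

lemma add (hf : IsBddMeasurable f) (hf' : IsBddMeasurable f') :
    IsBddMeasurable fun a => f a + f' a := by
  obtain ⟨C, hC⟩ := hf.bounded
  obtain ⟨C', hC'⟩ := hf'.bounded
  exact ⟨hf.measurable.add hf'.measurable, C + C',
    fun a => (abs_add_le _ _).trans (add_le_add (hC a) (hC' a))⟩

lemma const_mul (hf : IsBddMeasurable f) (c : ℝ) : IsBddMeasurable fun a => c * f a :=
  hf.continuous_comp (continuous_const_mul c)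

lemma sub (hf : IsBddMeasurable f) (hf' : IsBddMeasurable f') :
    IsBddMeasurable fun a => f a - f' a := by
  simpa [sub_eq_add_neg] using hf.add (hf'.const_mul (-1))

lemma integrable (hf : IsBddMeasurable f) (μ : Measure α) [IsFiniteMeasure μ] :
    Integrable f μ :=
  hf.bounded.elim fun C hC =>
    .of_bound hf.measurable.aestronglyMeasurable C (.of_forall hC)

lemma intervalIntegrable {f : ℝ → ℝ} (hf : IsBddMeasurable f) (a b : ℝ) :
    IntervalIntegrable f volume a b :=
  ⟨hf.integrable _, hf.integrable _⟩

lemma integral_kernel {f : β → X → ℝ} (hf : IsBddMeasurable (uncurry f)) (P : Kernel α X)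
    [IsMarkovKernel P] {e : β → α} (he : Measurable e) :
    IsBddMeasurable fun b => ∫ y, f b y ∂P (e b) := by
  obtain ⟨C, hC⟩ := hf.bounded
  refine ⟨?_, C, fun b => ?_⟩
  · exact (hf.measurable.stronglyMeasurable.integral_kernel_prod_right
      (κ := P.comap e he)).measurable
  · simpa using norm_integral_le_of_norm_le_const (μ := P (e b)) (f := f b) (C := C)
      (.of_forall fun y => hC (b, y))

lemma duhamel_integrand {F : X → ℝ → ℝ} (hF : IsBddMeasurable (uncurry F))
    (P : Kernel (ℝ × X) X) [IsMarkovKernel P] (t : ℝ) (x : X) :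
    IsBddMeasurable fun s => ∫ y, F y s ∂P (t - s, x) :=
  (hF.comp_measurable measurable_swap).integral_kernel (f := fun s y => F y s) P
    (e := fun s => (t - s, x)) (by fun_prop)

lemma exists_abs_comp_sub_comp_le (hf : IsBddMeasurable f) (hf' : IsBddMeasurable f')
    {h : ℝ → ℝ} (hh : LocallyLipschitz h) :
    ∃ L, 0 ≤ L ∧ ∀ a, |h (f a) - h (f' a)| ≤ L * |f a - f' a| := by
  obtain ⟨C, hC⟩ := hf.bounded
  obtain ⟨C', hC'⟩ := hf'.bounded
  obtain ⟨K, hK⟩ := hh.locallyLipschitzOn.exists_lipschitzOnWith_of_compact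
    (isCompact_Icc (a := -max C C') (b := max C C'))
  exact ⟨K, K.2, fun a => hK.dist_le_mul _ (abs_le.mp ((hC a).trans (le_max_left _ _))) _
    (abs_le.mp ((hC' a).trans (le_max_right _ _)))⟩

lemma exists_extend_time {T : ℝ} (hT : 0 ≤ T) {f : X → ℝ → ℝ}
    (hf : IsBddMeasurable fun p : X × Icc (0 : ℝ) T => f p.1 p.2) :
    ∃ f' : X → ℝ → ℝ, IsBddMeasurable (uncurry f') ∧ ∀ x, ∀ t ∈ Icc (0 : ℝ) T, f x t = f' x t := by
  refine ⟨fun x t => f x (projIcc 0 T hT t), ?_, fun x t ht => by simp only [projIcc_of_mem hT ht]⟩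
  exact hf.comp_measurable (e := fun p : X × ℝ => (p.1, projIcc 0 T hT p.2))
    (measurable_fst.prodMk (continuous_projIcc.measurable.comp measurable_snd))

lemma of_continuousOn_univ_prod [TopologicalSpace X] [OpensMeasurableSpace X] {S : Set ℝ}
    {f : X → ℝ → ℝ} (hf : ContinuousOn (fun p : X × ℝ => f p.1 p.2) (univ ×ˢ S))
    (hf_bdd : ∃ C, ∀ x, ∀ t ∈ S, |f x t| ≤ C) : IsBddMeasurable fun p : X × S => f p.1 p.2 := by
  have hcont : Continuous fun p : X × S => f p.1 p.2 :=
    hf.comp_continuous (f := fun p : X × S => (p.1, (p.2 : ℝ))) (by fun_prop)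
      fun p => ⟨trivial, p.2.2⟩
  exact ⟨hcont.measurable, hf_bdd.imp fun _ hC p => hC p.1 p.2 p.2.2⟩

end IsBddMeasurable

/-! ### Duhamel's formula for Markov semigroups -/

lemma exp_mul_add_integral_eq {b : ℝ → ℝ} {t : ℝ} (hb : IntervalIntegrable b volume 0 t)
    (a L : ℝ) :
    exp (L * t) * (a + ∫ r in (0 : ℝ)..t, b r) =
      a + ∫ s in (0 : ℝ)..t, exp (L * s) * (b s + L * (a + ∫ r in (0 : ℝ)..s, b r)) := by
  set q : ℝ → ℝ := fun s => a + ∫ r in (0 : ℝ)..s, b r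
  have hexp_ac : AbsolutelyContinuousOnInterval (fun s => exp (L * s)) 0 t :=
    ContDiffOn.absolutelyContinuousOnInterval (by fun_prop)
  have hq_ac : AbsolutelyContinuousOnInterval q 0 t :=
    (ContDiffOn.absolutelyContinuousOnInterval contDiffOn_const).add
      (hb.absolutelyContinuousOnInterval_intervalIntegral left_mem_uIcc)
  have hparts := hexp_ac.integral_deriv_mul_eq_sub hq_ac
  have hderiv : ∫ s in (0 : ℝ)..t, deriv (fun s => exp (L * s)) s * q s + exp (L * s) * deriv q s =
      ∫ s in (0 : ℝ)..t, exp (L * s) * (b s + L * q s) := by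
    refine intervalIntegral.integral_congr_ae ?_
    filter_upwards [hb.ae_hasDerivAt_integral] with s hs hst
    have hq_deriv : HasDerivAt q (b s) s :=
      (hs (uIoc_subset_uIcc hst) 0 left_mem_uIcc).const_add a
    have hexp_deriv : HasDerivAt (fun s => exp (L * s)) (exp (L * s) * L) s := by
      simpa using ((hasDerivAt_id s).const_mul L).exp
    rw [hq_deriv.deriv, hexp_deriv.deriv]
    ring
  have hq_zero : q 0 = a := by simp [q]
  rw [hderiv, mul_zero, exp_zero, one_mul, hq_zero] at hparts
  linarith

/-- The Chapman-Kolmogorov equations for a family of transition kernels: `P (t, x)` is the law at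
time `t` of the process started at `x`. Times are real numbers, and `P` is unconstrained at
negative ones. -/
def SatisfiesChapmanKolmogorov (P : Kernel (ℝ × X) X) : Prop :=
  ∀ ⦃s t : ℝ⦄, 0 ≤ s → 0 ≤ t → P.sectR (s + t) = P.sectR t ∘ₖ P.sectR s

variable {P : Kernel (ℝ × X) X}

lemma SatisfiesChapmanKolmogorov.integral_integral [IsMarkovKernel P]
    (hP : SatisfiesChapmanKolmogorov P) {s t : ℝ} (hs : 0 ≤ s) (ht : 0 ≤ t) {f : X → ℝ}
    (hf : IsBddMeasurable f) (x : X) :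
    ∫ y, ∫ z, f z ∂P (t, y) ∂P (s, x) = ∫ z, f z ∂P (s + t, x) := by
  simp only [← Kernel.sectR_apply]
  rw [hP hs ht, Kernel.integral_comp (hf.integrable _)]

/-- `w` is a mild solution on `[0, T]` of the linear equation `∂ₜ w = 𝓛 w + F`, where `𝓛` is the
generator of the transition kernels `P`: it satisfies Duhamel's formula. -/
def IsDuhamelSolution (P : Kernel (ℝ × X) X) (T : ℝ) (F w : X → ℝ → ℝ) : Prop :=
  ∀ x, ∀ t ∈ Icc 0 T,
    w x t = ∫ y, w y 0 ∂P (t, x) + ∫ s in (0 : ℝ)..t, ∫ y, F y s ∂P (t - s, x)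

namespace IsDuhamelSolution

variable {T L : ℝ} {F F' w w' : X → ℝ → ℝ}

lemma congr (hw : IsDuhamelSolution P T F w) (hF : ∀ x, ∀ t ∈ Icc 0 T, F x t = F' x t)
    (hww' : ∀ x, ∀ t ∈ Icc 0 T, w x t = w' x t) : IsDuhamelSolution P T F' w' := by
  intro x t ht
  have h0 : (0 : ℝ) ∈ Icc 0 T := ⟨le_rfl, ht.1.trans ht.2⟩
  rw [← hww' x t ht, hw x t ht]
  congr 1
  · simp_rw [hww' _ 0 h0]
  · refine intervalIntegral.integral_congr fun s hs => ?_
    rw [uIcc_of_le ht.1] at hs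
    simp_rw [hF _ s ⟨hs.1, hs.2.trans ht.2⟩]

variable [IsMarkovKernel P]

lemma sub (hw : IsDuhamelSolution P T F w) (hw' : IsDuhamelSolution P T F' w')
    (hF_bdd : IsBddMeasurable (uncurry F)) (hF'_bdd : IsBddMeasurable (uncurry F'))
    (hw_bdd : IsBddMeasurable (uncurry w)) (hw'_bdd : IsBddMeasurable (uncurry w')) :
    IsDuhamelSolution P T (fun x t => F x t - F' x t) (fun x t => w x t - w' x t) := by
  intro x t ht
  simp_rw [integral_sub ((hw_bdd.slice _).integrable _) ((hw'_bdd.slice _).integrable _),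
    integral_sub ((hF_bdd.slice _).integrable _) ((hF'_bdd.slice _).integrable _)]
  rw [intervalIntegral.integral_sub
      ((hF_bdd.duhamel_integrand P t x).intervalIntegrable 0 t)
      ((hF'_bdd.duhamel_integrand P t x).intervalIntegrable 0 t),
    hw x t ht, hw' x t ht]
  ring

lemma integral_remaining_time_eq (hw : IsDuhamelSolution P T F w)
    (hP : SatisfiesChapmanKolmogorov P) (hF_bdd : IsBddMeasurable (uncurry F))
    (hw_bdd : IsBddMeasurable (uncurry w)) {s t : ℝ} (hs : s ∈ Icc 0 T) (hst : s ≤ t) (x : X) :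
    ∫ y, w y s ∂P (t - s, x) =
      ∫ y, w y 0 ∂P (t, x) + ∫ r in (0 : ℝ)..s, ∫ y, F y r ∂P (t - r, x) := by
  have semigroup {f : X → ℝ → ℝ} (hf : IsBddMeasurable (uncurry f)) {r : ℝ} (hr : r ≤ s) (q : ℝ) :
      ∫ y, ∫ z, f z q ∂P (s - r, y) ∂P (t - s, x) = ∫ z, f z q ∂P (t - r, x) := by
    rw [hP.integral_integral (sub_nonneg.mpr hst) (sub_nonneg.mpr hr) (hf.slice q),
      sub_add_sub_cancel]
  have hfree : IsBddMeasurable fun y => ∫ z, w z 0 ∂P (s, y) :=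
    (hw_bdd.comp_measurable (e := fun p : X × X => (p.2, (0 : ℝ))) (by fun_prop)).integral_kernel
      (f := fun _ z => w z 0) P (e := fun y => (s, y)) (by fun_prop)
  have hforcing : IsBddMeasurable fun p : X × ℝ => ∫ z, F z p.2 ∂P (s - p.2, p.1) :=
    (hF_bdd.comp_measurable (e := fun p : (X × ℝ) × X => (p.2, p.1.2))
      (by fun_prop)).integral_kernel (f := fun p z => F z p.2) P
      (e := fun p : X × ℝ => (s - p.2, p.1)) (by fun_prop)
  have hforcing_int := hforcing.integrable ((P (t - s, x)).prod (volume.restrict (Ioc 0 s)))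
  calc ∫ y, w y s ∂P (t - s, x)
    _ = ∫ y, (∫ z, w z 0 ∂P (s, y) + ∫ r in Ioc 0 s, ∫ z, F z r ∂P (s - r, y)) ∂P (t - s, x) := by
      simp_rw [hw _ s hs, intervalIntegral.integral_of_le hs.1]
    _ = ∫ y, ∫ z, w z 0 ∂P (s, y) ∂P (t - s, x) +
        ∫ r in Ioc 0 s, ∫ y, ∫ z, F z r ∂P (s - r, y) ∂P (t - s, x) := by
      rw [integral_add (hfree.integrable _) hforcing_int.integral_prod_left,
        integral_integral_swap hforcing_int]
    _ = ∫ y, w y 0 ∂P (t, x) + ∫ r in (0 : ℝ)..s, ∫ y, F y r ∂P (t - r, x) := by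
      rw [intervalIntegral.integral_of_le hs.1]
      congr 1
      · simpa using semigroup hw_bdd hs.1 0
      · exact setIntegral_congr_fun measurableSet_Ioc fun r hr => semigroup hF_bdd hr.2 r

/-- Duhamel's formula for the equation `∂ₜ w = (𝓛 - L) w + (F + L w)`. -/
lemma exp_mul_eq (hw : IsDuhamelSolution P T F w) (hP : SatisfiesChapmanKolmogorov P)
    (hF_bdd : IsBddMeasurable (uncurry F)) (hw_bdd : IsBddMeasurable (uncurry w)) (L : ℝ) (x : X)
    {t : ℝ} (ht : t ∈ Icc 0 T) :
    exp (L * t) * w x t = ∫ y, w y 0 ∂P (t, x) +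
      ∫ s in (0 : ℝ)..t, exp (L * s) * ∫ y, (F y s + L * w y s) ∂P (t - s, x) := by
  rw [hw x t ht, exp_mul_add_integral_eq
    ((hF_bdd.duhamel_integrand P t x).intervalIntegrable 0 t)]
  congr 1
  refine intervalIntegral.integral_congr fun s hs => ?_
  rw [uIcc_of_le ht.1] at hs
  rw [integral_add ((hF_bdd.slice s).integrable _) (((hw_bdd.slice s).integrable _).const_mul L),
    integral_const_mul, hw.integral_remaining_time_eq hP hF_bdd hw_bdd ⟨hs.1, hs.2.trans ht.2⟩ hs.2]

lemma neg_integral_le (hw : IsDuhamelSolution P T F w) (hP : SatisfiesChapmanKolmogorov P)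
    (hF_bdd : IsBddMeasurable (uncurry F)) (hw_bdd : IsBddMeasurable (uncurry w))
    (hw_zero : ∀ x, 0 ≤ w x 0) (hL : 0 ≤ L) {m : ℝ → ℝ} (hm : Continuous m)
    (hm_nonneg : ∀ t ∈ Icc 0 T, 0 ≤ m t) (hFm : ∀ x, ∀ t ∈ Icc 0 T, -m t ≤ F x t + L * w x t)
    (x : X) {t : ℝ} (ht : t ∈ Icc 0 T) : -∫ s in (0 : ℝ)..t, m s ≤ w x t := by
  have hforcing : IsBddMeasurable (uncurry fun y s => F y s + L * w y s) :=
    hF_bdd.add (hw_bdd.const_mul L)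
  have hforcing_lower : ∀ s ∈ Icc 0 t, -m s ≤ ∫ y, (F y s + L * w y s) ∂P (t - s, x) := by
    intro s hs
    calc -m s = ∫ _, -m s ∂P (t - s, x) := by simp
      _ ≤ ∫ y, (F y s + L * w y s) ∂P (t - s, x) :=
        integral_mono (integrable_const _) ((hforcing.slice s).integrable _)
          fun y => hFm y s ⟨hs.1, hs.2.trans ht.2⟩
  have hscaled : exp (L * t) * -∫ s in (0 : ℝ)..t, m s ≤ exp (L * t) * w x t :=
    calc exp (L * t) * -∫ s in (0 : ℝ)..t, m s
      _ = ∫ s in (0 : ℝ)..t, exp (L * t) * -m s := by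
        rw [intervalIntegral.integral_const_mul, intervalIntegral.integral_neg]
      _ ≤ ∫ s in (0 : ℝ)..t, exp (L * s) * ∫ y, (F y s + L * w y s) ∂P (t - s, x) := by
        refine intervalIntegral.integral_mono_on ht.1
          (Continuous.intervalIntegrable (by fun_prop) _ _)
          (((hforcing.duhamel_integrand P t x).intervalIntegrable 0 t).continuousOn_mul
            (by fun_prop)) fun s hs => ?_
        calc exp (L * t) * -m s
          _ ≤ exp (L * s) * -m s := mul_le_mul_of_nonpos_right
              (exp_le_exp.mpr (mul_le_mul_of_nonneg_left hs.2 hL))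
              (neg_nonpos.mpr (hm_nonneg s ⟨hs.1, hs.2.trans ht.2⟩))
          _ ≤ _ := by gcongr; exact hforcing_lower s hs
      _ ≤ exp (L * t) * w x t := by
        rw [hw.exp_mul_eq hP hF_bdd hw_bdd L x ht]
        exact le_add_of_nonneg_left (integral_nonneg hw_zero)
  exact le_of_mul_le_mul_left hscaled (exp_pos _)

lemma neg_pow_div_factorial_le (hw : IsDuhamelSolution P T F w) (hP : SatisfiesChapmanKolmogorov P)
    (hF_bdd : IsBddMeasurable (uncurry F)) (hw_bdd : IsBddMeasurable (uncurry w))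
    (hw_zero : ∀ x, 0 ≤ w x 0) (hL : 0 ≤ L) (hFL : ∀ x, ∀ t ∈ Icc 0 T, -(L * |w x t|) ≤ F x t)
    {C : ℝ} (hC : ∀ x t, |w x t| ≤ C) (n : ℕ) (x : X) {t : ℝ} (ht : t ∈ Icc 0 T) :
    -(C * ((2 * L * t) ^ n / n !)) ≤ w x t := by
  have hC_nonneg : 0 ≤ C := (abs_nonneg _).trans (hC x 0)
  induction n generalizing x t with
  | zero => simpa using neg_le_of_abs_le (hC x t)
  | succ n ih =>
    have hm_nonneg : ∀ s ∈ Icc 0 T, 0 ≤ C * ((2 * L * s) ^ n / n !) := fun s hs => by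
      have := hs.1
      positivity
    have hintegral : ∫ s in (0 : ℝ)..t, 2 * L * (C * ((2 * L * s) ^ n / n !)) =
        C * ((2 * L * t) ^ (n + 1) / (n + 1)!) := by
      simp_rw [mul_pow, intervalIntegral.integral_const_mul, intervalIntegral.integral_div,
        intervalIntegral.integral_const_mul, integral_pow, Nat.factorial_succ]
      push_cast
      field_simp
      ring
    rw [← hintegral]
    refine hw.neg_integral_le hP hF_bdd hw_bdd hw_zero hL (by fun_prop)
      (fun s hs => mul_nonneg (by positivity) (hm_nonneg s hs)) (fun y s hs => ?_) x ht
    have habs : |w y s| - w y s ≤ 2 * (C * ((2 * L * s) ^ n / n !)) := by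
      rcases abs_cases (w y s) with h | h <;> linarith [ih y hs, hm_nonneg s hs]
    linarith [hFL y s hs, mul_le_mul_of_nonneg_left habs hL]

theorem nonneg (hw : IsDuhamelSolution P T F w) (hP : SatisfiesChapmanKolmogorov P)
    (hF_bdd : IsBddMeasurable (uncurry F)) (hw_bdd : IsBddMeasurable (uncurry w))
    (hw_zero : ∀ x, 0 ≤ w x 0) (hL : 0 ≤ L) (hFL : ∀ x, ∀ t ∈ Icc 0 T, -(L * |w x t|) ≤ F x t)
    (x : X) {t : ℝ} (ht : t ∈ Icc 0 T) : 0 ≤ w x t := by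
  obtain ⟨C, hC⟩ := hw_bdd.bounded
  have hlim : Filter.Tendsto (fun n : ℕ => -(C * ((2 * L * t) ^ n / n !))) Filter.atTop
      (nhds 0) := by
    simpa using ((FloorSemiring.tendsto_pow_div_factorial_atTop (2 * L * t)).const_mul C).neg
  exact le_of_tendsto' hlim fun n => hw.neg_pow_div_factorial_le hP hF_bdd hw_bdd hw_zero hL hFL
    (fun y s => hC (y, s)) n x ht

end IsDuhamelSolution

theorem mild_solution_comparison_principle_general [IsMarkovKernel P]
    (hP : SatisfiesChapmanKolmogorov P) {g h : ℝ → ℝ} (hh : LocallyLipschitz h)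
    (hgh : ∀ ζ, g ζ ≤ h ζ) {T : ℝ} {u v : X → ℝ → ℝ}
    (hu_bdd : IsBddMeasurable fun p : X × Icc (0 : ℝ) T => u p.1 p.2)
    (hv_bdd : IsBddMeasurable fun p : X × Icc (0 : ℝ) T => v p.1 p.2)
    (hgu_bdd : IsBddMeasurable fun p : X × Icc (0 : ℝ) T => g (u p.1 p.2))
    (hu : IsDuhamelSolution P T (fun x t => g (u x t)) u)
    (hv : IsDuhamelSolution P T (fun x t => h (v x t)) v) (h0 : ∀ x, u x 0 ≤ v x 0) :
    ∀ x, ∀ t ∈ Icc (0 : ℝ) T, u x t ≤ v x t := by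
  intro x t ht
  have hT : 0 ≤ T := ht.1.trans ht.2
  obtain ⟨L, hL, hLip⟩ := hv_bdd.exists_abs_comp_sub_comp_le hu_bdd hh
  obtain ⟨U, hU_bdd, hU⟩ := hu_bdd.exists_extend_time hT
  obtain ⟨V, hV_bdd, hV⟩ := hv_bdd.exists_extend_time hT
  obtain ⟨G, hG_bdd, hG⟩ := hgu_bdd.exists_extend_time hT (f := fun x t => g (u x t))
  obtain ⟨H, hH_bdd, hH⟩ := (hv_bdd.continuous_comp hh.continuous).exists_extend_time hT
    (f := fun x t => h (v x t))
  have hVU : IsDuhamelSolution P T (fun x t => H x t - G x t) (fun x t => V x t - U x t) :=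
    (hv.congr hH hV).sub (hu.congr hG hU) hH_bdd hG_bdd hV_bdd hU_bdd
  have hVU_nonneg : 0 ≤ V x t - U x t := by
    refine hVU.nonneg hP (hH_bdd.sub hG_bdd) (hV_bdd.sub hU_bdd) (fun y => ?_) hL
      (fun y s hs => ?_) x ht
    · rw [← hV y 0 ⟨le_rfl, hT⟩, ← hU y 0 ⟨le_rfl, hT⟩]
      exact sub_nonneg.mpr (h0 y)
    · rw [← hV y s hs, ← hU y s hs, ← hH y s hs, ← hG y s hs]
      linarith [neg_le_of_abs_le (hLip (y, ⟨s, hs⟩)), hgh (u y s)]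
  rwa [← hV x t ht, ← hU x t ht, sub_nonneg] at hVU_nonneg

/-! ### Cauchy transition kernels -/

lemma eqOn_cexp_neg_mul_abs_add_Iic (c ξ : ℝ) :
    EqOn (fun x : ℝ => Complex.exp (-(c * |x|) + ξ * x * Complex.I))
      (fun x => Complex.exp ((c + ξ * Complex.I) * x)) (Iic 0) := by
  intro x hx
  simp only [abs_of_nonpos (mem_Iic.mp hx)]
  push_cast
  ring_nf

lemma eqOn_cexp_neg_mul_abs_add_Ioi (c ξ : ℝ) :
    EqOn (fun x : ℝ => Complex.exp (-(c * |x|) + ξ * x * Complex.I))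
      (fun x => Complex.exp ((-c + ξ * Complex.I) * x)) (Ioi 0) := by
  intro x hx
  simp only [abs_of_pos (mem_Ioi.mp hx)]
  ring_nf

lemma integrable_cexp_neg_mul_abs_add {c : ℝ} (hc : 0 < c) (ξ : ℝ) :
    Integrable fun x : ℝ => Complex.exp (-(c * |x|) + ξ * x * Complex.I) := by
  rw [← integrableOn_univ, ← Iic_union_Ioi (a := (0 : ℝ)), integrableOn_union,
    integrableOn_congr_fun (eqOn_cexp_neg_mul_abs_add_Iic c ξ) measurableSet_Iic,
    integrableOn_congr_fun (eqOn_cexp_neg_mul_abs_add_Ioi c ξ) measurableSet_Ioi]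
  exact ⟨integrableOn_exp_mul_complex_Iic (by simpa using hc) 0,
    integrableOn_exp_mul_complex_Ioi (by simpa using hc) 0⟩

lemma integral_cexp_neg_mul_abs_add {c : ℝ} (hc : 0 < c) (ξ : ℝ) :
    ∫ x : ℝ, Complex.exp (-(c * |x|) + ξ * x * Complex.I) = 2 * c / (c ^ 2 + ξ ^ 2) := by
  have hIic : ∫ x : ℝ in Iic 0, Complex.exp (-(c * |x|) + ξ * x * Complex.I) =
      1 / (c + ξ * Complex.I) := by
    rw [setIntegral_congr_fun measurableSet_Iic (eqOn_cexp_neg_mul_abs_add_Iic c ξ),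
      integral_exp_mul_complex_Iic (by simpa using hc), Complex.ofReal_zero, mul_zero,
      Complex.exp_zero]
  have hIoi : ∫ x : ℝ in Ioi 0, Complex.exp (-(c * |x|) + ξ * x * Complex.I) =
      -1 / (-c + ξ * Complex.I) := by
    rw [setIntegral_congr_fun measurableSet_Ioi (eqOn_cexp_neg_mul_abs_add_Ioi c ξ),
      integral_exp_mul_complex_Ioi (by simpa using hc), Complex.ofReal_zero, mul_zero,
      Complex.exp_zero]
  have hpos : c + ξ * Complex.I ≠ 0 := fun h => hc.ne' (by simpa using congr(($h).re))
  have hneg : -c + ξ * Complex.I ≠ 0 := fun h => hc.ne' (by simpa using congr(($h).re))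
  have hprod : (c + ξ * Complex.I) * (-c + ξ * Complex.I) = -(c ^ 2 + ξ ^ 2 : ℂ) := by
    linear_combination ξ ^ 2 * Complex.I_sq
  have hint := integrable_cexp_neg_mul_abs_add hc ξ
  rw [← intervalIntegral.integral_Iic_add_Ioi hint.integrableOn hint.integrableOn, hIic, hIoi,
    div_add_div _ _ hpos hneg, hprod, ← neg_div_neg_eq]
  ring

lemma fourier_cexp_eq_cauchyPDFReal (x₀ : ℝ) {γ : ℝ≥0} (hγ : γ ≠ 0) :
    𝓕 (fun x : ℝ => Complex.exp (-((2 * π * γ : ℝ) * |x|) + (2 * π * x₀ : ℝ) * x * Complex.I)) =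
      fun ξ => (cauchyPDFReal x₀ γ ξ : ℂ) := by
  ext ξ
  have hexp (x : ℝ) : Complex.exp (↑(-2 * π * x * ξ) * Complex.I) •
      Complex.exp (-((2 * π * γ : ℝ) * |x|) + (2 * π * x₀ : ℝ) * x * Complex.I) =
      Complex.exp (-((2 * π * γ : ℝ) * |x|) + (2 * π * (x₀ - ξ) : ℝ) * x * Complex.I) := by
    rw [smul_eq_mul, ← Complex.exp_add]
    push_cast
    ring_nf
  simp_rw [Real.fourier_real_eq_integral_exp_smul, hexp]
  have hden : (2 * π * γ) ^ 2 + (2 * π * (x₀ - ξ)) ^ 2 =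
      (2 * π) ^ 2 * ((ξ - x₀) ^ 2 + (γ : ℝ) ^ 2) := by ring
  have hpdf : 2 * (2 * π * γ) / ((2 * π * γ) ^ 2 + (2 * π * (x₀ - ξ)) ^ 2) =
      cauchyPDFReal x₀ γ ξ := by
    rw [hden, cauchyPDFReal_def]
    field_simp
  rw [integral_cexp_neg_mul_abs_add (by positivity), ← hpdf]
  norm_cast

lemma integral_cauchyMeasure_eq_integral_smul {E : Type*} [NormedAddCommGroup E] [NormedSpace ℝ E]
    (x₀ : ℝ) {γ : ℝ≥0} (hγ : γ ≠ 0) (f : ℝ → E) :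
    ∫ x, f x ∂cauchyMeasure x₀ γ = ∫ x, cauchyPDFReal x₀ γ x • f x := by
  rw [cauchyMeasure_of_scale_ne_zero x₀ hγ, integral_withDensity_eq_integral_toReal_smul
    (measurable_cauchyPDF x₀ γ) (.of_forall fun _ => ENNReal.ofReal_lt_top)]
  simp_rw [cauchyPDF_def, ENNReal.toReal_ofReal (cauchyPDF_pos x₀ hγ _).le]

lemma charFun_cauchyMeasure (x₀ : ℝ) (γ : ℝ≥0) (t : ℝ) :
    charFun (cauchyMeasure x₀ γ) t = Complex.exp (x₀ * t * Complex.I - γ * |t|) := by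
  rcases eq_or_ne γ 0 with rfl | hγ
  · simp [charFun_dirac, mul_comm]
  have hfourier := fourier_cexp_eq_cauchyPDFReal x₀ hγ
  have hinv := congrFun (Continuous.fourierInv_fourier_eq (by fun_prop)
    (integrable_cexp_neg_mul_abs_add (by positivity) _)
    (hfourier ▸ (integrable_cauchyPDFReal x₀).ofReal)) (t / (2 * π))
  rw [hfourier, Real.fourierInv_eq'] at hinv
  rw [charFun_apply_real, integral_cauchyMeasure_eq_integral_smul x₀ hγ]
  convert hinv using 1
  · congr with x
    rw [smul_eq_mul, Complex.real_smul, mul_comm]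
    simp only [RCLike.inner_apply, conj_trivial]
    congr 3
    push_cast
    field_simp
  · rw [abs_div, abs_of_pos two_pi_pos]
    push_cast
    field_simp
    ring_nf

lemma measurable_cauchyMeasure : Measurable (uncurry cauchyMeasure) := by
  unfold cauchyMeasure cauchyPDF cauchyPDFReal
  exact Measurable.ite (by measurability) (by fun_prop) (by fun_prop)

/-- The transition kernels of the stable process of index `1` with generator `-A`: at time `t` the
process started at `x` has a Cauchy law of scale `κ * t` centred at `x - σ * t`, which is the law
with density `y ↦ stableKernel κ σ t (x - y)` for `κ, t > 0` and the Dirac mass at `x` for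
`t = 0`. -/
noncomputable def cauchyTransition (κ σ : ℝ) : Kernel (ℝ × ℝ) ℝ where
  toFun p := cauchyMeasure (p.2 - σ * p.1) (κ * p.1).toNNReal
  measurable' := measurable_cauchyMeasure.comp
    (f := fun p : ℝ × ℝ => (p.2 - σ * p.1, (κ * p.1).toNNReal)) (by fun_prop)

lemma cauchyTransition_apply (κ σ t x : ℝ) :
    cauchyTransition κ σ (t, x) = cauchyMeasure (x - σ * t) (κ * t).toNNReal := rfl

instance isMarkovKernel_cauchyTransition (κ σ : ℝ) : IsMarkovKernel (cauchyTransition κ σ) :=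
  ⟨fun _ => instIsProbabilityMeasure_cauchyMeasure _ _⟩

lemma satisfiesChapmanKolmogorov_cauchyTransition {κ : ℝ} (hκ : 0 ≤ κ) (σ : ℝ) :
    SatisfiesChapmanKolmogorov (cauchyTransition κ σ) := by
  intro s t hs ht
  have hcharFun {r : ℝ} (hr : 0 ≤ r) (y ξ : ℝ) : charFun (cauchyTransition κ σ (r, y)) ξ =
      Complex.exp (ξ * y * Complex.I) * Complex.exp (-(r * (κ * |ξ| + σ * ξ * Complex.I))) := by
    rw [cauchyTransition_apply, charFun_cauchyMeasure, Real.coe_toNNReal _ (mul_nonneg hκ hr),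
      ← Complex.exp_add]
    push_cast
    ring_nf
  ext1 x
  refine Measure.ext_of_charFun (funext fun ξ => ?_)
  have hint : Integrable (fun z : ℝ => Complex.exp (ξ * z * Complex.I))
      (((cauchyTransition κ σ).sectR t ∘ₖ (cauchyTransition κ σ).sectR s) x) :=
    .of_bound (by fun_prop) 1 (.of_forall fun z => by
      rw [← Complex.ofReal_mul, Complex.norm_exp_ofReal_mul_I])
  rw [charFun_apply_real (μ := (_ ∘ₖ _) x), Kernel.integral_comp hint]
  simp_rw [← charFun_apply_real, Kernel.sectR_apply, hcharFun ht, integral_mul_const,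
    ← charFun_apply_real, hcharFun hs, hcharFun (add_nonneg hs ht), ← Complex.exp_add]
  push_cast
  ring_nf

lemma integral_stableKernel_mul {κ t : ℝ} (hκ : 0 < κ) (ht : 0 < t) (σ x : ℝ) (f : ℝ → ℝ) :
    ∫ y, stableKernel κ σ t (x - y) * f y = ∫ y, f y ∂cauchyTransition κ σ (t, x) := by
  have hscale : 0 < κ * t := mul_pos hκ ht
  rw [cauchyTransition_apply,
    integral_cauchyMeasure_eq_integral_smul _ (Real.toNNReal_pos.mpr hscale).ne']
  congr with y
  have hsq : (y - (x - σ * t)) ^ 2 = (x - y - σ * t) ^ 2 := by ring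
  rw [cauchyPDFReal_def, Real.coe_toNNReal _ hscale.le, hsq, stableKernel, smul_eq_mul,
    div_eq_mul_inv, mul_inv]
  ring

lemma IsMildSolution.isDuhamelSolution {κ σ T : ℝ} {g : ℝ → ℝ} {u : ℝ → ℝ → ℝ}
    (hu : IsMildSolution κ σ g T u) (hκ : 0 < κ) :
    IsDuhamelSolution (cauchyTransition κ σ) T (fun x t => g (u x t)) u := by
  intro x t ht
  rcases ht.1.eq_or_lt with rfl | ht_pos
  · simp [cauchyTransition_apply]
  · -- At `s = t` the integrands differ: `stableKernel κ σ 0` vanishes, the transition is Dirac.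
    rw [hu x t ht_pos ht.2, integral_stableKernel_mul hκ ht_pos,
      intervalIntegral.integral_of_le ht.1, integral_Ioc_eq_integral_Ioo,
      integral_Ioc_eq_integral_Ioo]
    congr 1
    exact setIntegral_congr_fun measurableSet_Ioo fun s hs =>
      integral_stableKernel_mul hκ (sub_pos.mpr hs.2) σ x fun y => g (u y s)

end

/-- Comparison principle. If `g ≤ h` are locally Lipschitz,
`u, v` are bounded continuous mild solutions on `ℝ × [0,T]` of
`∂_t u + Au = g(u)`, `∂_t v + Av = h(v)`, and `u(·,0) ≤ v(·,0)`, then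
`u ≤ v` on `ℝ × [0,T]`. -/
theorem mild_solution_comparison_principle
    (β : ℝ) (hβ : β ∈ Set.Ioo (-1 : ℝ) 1)
    (κ σ : ℝ) (hκ : κ = Real.cos (π * β / 2)) (hσ : σ = Real.sin (π * β / 2))
    (g h : ℝ → ℝ) (hg : LocallyLipschitz g) (hh : LocallyLipschitz h)
    (hgh : ∀ ζ : ℝ, g ζ ≤ h ζ)
    (T : ℝ) (hT : 0 < T)
    (u v : ℝ → ℝ → ℝ)
    (hu_cont : ContinuousOn (fun p : ℝ × ℝ => u p.1 p.2)
      (Set.univ ×ˢ Set.Icc 0 T))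
    (hv_cont : ContinuousOn (fun p : ℝ × ℝ => v p.1 p.2)
      (Set.univ ×ˢ Set.Icc 0 T))
    (hu_bdd : ∃ M : ℝ, ∀ x : ℝ, ∀ t ∈ Set.Icc (0 : ℝ) T, |u x t| ≤ M)
    (hv_bdd : ∃ M : ℝ, ∀ x : ℝ, ∀ t ∈ Set.Icc (0 : ℝ) T, |v x t| ≤ M)
    (hu : IsMildSolution κ σ g T u) (hv : IsMildSolution κ σ h T v)
    (h0 : ∀ x : ℝ, u x 0 ≤ v x 0) :
    ∀ x : ℝ, ∀ t ∈ Set.Icc (0 : ℝ) T, u x t ≤ v x t := by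
  have hκ_pos : 0 < κ := by
    rw [hκ]
    exact cos_pos_of_mem_Ioo ⟨by nlinarith [hβ.1, pi_pos], by nlinarith [hβ.2, pi_pos]⟩
  have hu_bm := IsBddMeasurable.of_continuousOn_univ_prod hu_cont hu_bdd
  have hv_bm := IsBddMeasurable.of_continuousOn_univ_prod hv_cont hv_bdd
  exact mild_solution_comparison_principle_general
    (satisfiesChapmanKolmogorov_cauchyTransition hκ_pos.le σ) hh hgh hu_bm hv_bm
    (hu_bm.continuous_comp hg.continuous) (hu.isDuhamelSolution hκ_pos)
    (hv.isDuhamelSolution hκ_pos) h0
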